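/- For every integer k ≥ 2 there exists a function C_k : ℝ × ℝ → ℝ such that for every T > 0, every smooth solution u of the 1-dimensional Schrödinger flow with Neumann boundary conditions on [0,T] with initial data u₀ = u(·,0), and every integer 0 ≤ i ≤ k, one has sup_{t ∈ [0,T]} ‖∂_t^i u(·,t)‖²_{H^{2(k−i)+1}} ≤ C_k(‖u₀‖²_{H^{2k+1}}, T). -/

import Mathlib

open MeasureTheory Set

noncomputable section

abbrev E3 := EuclideanSpace ℝ (Fin 3)

/-- The cross product on `EuclideanSpace ℝ (Fin 3)`. -/
def cross3 (a b : E3) : E3 :=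
  (WithLp.equiv 2 (Fin 3 → ℝ)).symm
    (crossProduct ((WithLp.equiv 2 (Fin 3 → ℝ)) a) ((WithLp.equiv 2 (Fin 3 → ℝ)) b))

/-- Partial derivative in the space variable of `u = u x t`. -/
def pdx (u : ℝ → ℝ → E3) : ℝ → ℝ → E3 := fun x t => deriv (fun y => u y t) x

/-- Partial derivative in the time variable of `u = u x t`. -/
def pdt (u : ℝ → ℝ → E3) : ℝ → ℝ → E3 := fun x t => deriv (fun s => u x s) t

/-- `u` is a smooth solution of the 1-dimensional Schrödinger flow with Neumann
boundary conditions on `[0,1] × [0,T]`. -/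
def IsSol (T : ℝ) (u : ℝ → ℝ → E3) : Prop :=
  ContDiff ℝ (⊤ : ℕ∞) (fun p : ℝ × ℝ => u p.1 p.2) ∧
  (∀ x ∈ Icc (0:ℝ) 1, ∀ t ∈ Icc (0:ℝ) T, ‖u x t‖ = 1) ∧
  (∀ x ∈ Icc (0:ℝ) 1, ∀ t ∈ Icc (0:ℝ) T, pdt u x t = cross3 (u x t) (pdx (pdx u) x t)) ∧
  (∀ t ∈ Icc (0:ℝ) T, pdx u 0 t = 0 ∧ pdx u 1 t = 0)

/-- Squared `L²` norm on `[0,1]`. -/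
def L2sq (f : ℝ → E3) : ℝ := ∫ x in (0:ℝ)..1, ‖f x‖ ^ 2

/-- Squared `H^k` Sobolev norm on `[0,1]`. -/
def Hsq (k : ℕ) (f : ℝ → E3) : ℝ :=
  ∑ j ∈ Finset.range (k + 1), ∫ x in (0:ℝ)..1, ‖deriv^[j] f x‖ ^ 2

/-!
Differentiating `∂ₜu = u × ∂ₓ²u` in `x` shows that, at each time, the sequence of space derivatives
`a m = ∂ₓᵐu` satisfies `∂ₜ(a m) = a 0 × a (m + 2) + m • a 1 × a (m + 1) + …`. Pairing with `a m`,
the first two terms still contain more than `m` derivatives. Up to the `x`-derivative of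
`⟪a m, a 0 × a (m + 1)⟫` they equal `(m - 1) ⟪a m, a 1 × a (m + 1)⟫`; as `a 1 ⟂ a 0`, this only
involves components of `a m` and `a (m + 1)` along `a 0`, and these are of lower order because
`‖u‖ = 1`. A second exact derivative removes the remaining term with `m + 1` derivatives. The
Neumann condition propagates to all derivatives of odd order, so the integrals of both exact
derivatives vanish.

For `m = 1, 2` this yields the conserved quantities `∫ ‖u_x‖²` and `∫ ‖u_xx‖² - (5/4) ‖u_x‖⁴`. For
`m ≥ 3`, Sobolev's inequality bounds what is left over by `1 + ∫ ‖a m‖²` with a constant depending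
on the lower norms only, and Grönwall's inequality gives a bound for all space derivatives.
Finally, the equation trades each time derivative for two space derivatives: `∂ₜⁱ∂ₓʲu` is a sum of
products of space derivatives of total order `2i + j`, in which the top one occurs at most once, so
that its `L²` norm suffices.
-/

open Filter Finset
open scoped ContDiff InnerProductSpace Topology

section CrossProduct

lemma cross3_apply_zero (a b : E3) : cross3 a b 0 = a 1 * b 2 - a 2 * b 1 := by
  simp [cross3, crossProduct]

lemma cross3_apply_one (a b : E3) : cross3 a b 1 = a 2 * b 0 - a 0 * b 2 := by
  simp [cross3, crossProduct]

lemma cross3_apply_two (a b : E3) : cross3 a b 2 = a 0 * b 1 - a 1 * b 0 := by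
  simp [cross3, crossProduct]

lemma inner_eq_sum_three (a b : E3) : ⟪a, b⟫_ℝ = a 0 * b 0 + a 1 * b 1 + a 2 * b 2 := by
  simp [PiLp.inner_apply, Fin.sum_univ_three, mul_comm]

/-- The cross product as a continuous bilinear map, so that it can be differentiated by the
product rule. -/
def crossCLM : E3 →L[ℝ] E3 →L[ℝ] E3 :=
  LinearMap.toContinuousBilinearMap <| LinearMap.mk₂ ℝ cross3
    (fun _ _ _ => by simp [cross3]) (fun _ _ _ => by simp [cross3])
    (fun _ _ _ => by simp [cross3]) (fun _ _ _ => by simp [cross3])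

lemma crossCLM_apply (a b : E3) : crossCLM a b = cross3 a b := rfl

lemma inner_cross3_swap_right (a b c : E3) : ⟪a, cross3 b c⟫_ℝ = -⟪a, cross3 c b⟫_ℝ := by
  simp only [inner_eq_sum_three, cross3_apply_zero, cross3_apply_one, cross3_apply_two]; ring

lemma inner_cross3_swap_left (a b c : E3) : ⟪a, cross3 b c⟫_ℝ = -⟪b, cross3 a c⟫_ℝ := by
  simp only [inner_eq_sum_three, cross3_apply_zero, cross3_apply_one, cross3_apply_two]; ring

lemma inner_cross3_swap_outer (a b c : E3) : ⟪a, cross3 b c⟫_ℝ = -⟪c, cross3 b a⟫_ℝ := by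
  rw [inner_cross3_swap_left, inner_cross3_swap_right, inner_cross3_swap_left c]

lemma inner_cross3_self_left (a b : E3) : ⟪a, cross3 a b⟫_ℝ = 0 := by
  simp only [inner_eq_sum_three, cross3_apply_zero, cross3_apply_one, cross3_apply_two]; ring

lemma inner_cross3_self_right (a b : E3) : ⟪b, cross3 a b⟫_ℝ = 0 := by
  rw [inner_cross3_swap_right, inner_cross3_self_left, neg_zero]

lemma cross3_self (a : E3) : cross3 a a = 0 := by
  simp [cross3]

lemma norm_cross3_sq_add_inner_sq (a b : E3) :
    ‖cross3 a b‖ ^ 2 + ⟪a, b⟫_ℝ ^ 2 = ‖a‖ ^ 2 * ‖b‖ ^ 2 := by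
  simp only [← real_inner_self_eq_norm_sq, inner_eq_sum_three, cross3_apply_zero,
    cross3_apply_one, cross3_apply_two]
  ring

lemma norm_cross3_le (a b : E3) : ‖cross3 a b‖ ≤ ‖a‖ * ‖b‖ := by
  refine le_of_sq_le_sq ?_ (by positivity)
  nlinarith [norm_cross3_sq_add_inner_sq a b, sq_nonneg ⟪a, b⟫_ℝ]

lemma hasDerivAt_cross3 {f g : ℝ → E3} {f' g' : E3} {x : ℝ} (hf : HasDerivAt f f' x)
    (hg : HasDerivAt g g' x) :
    HasDerivAt (fun y => cross3 (f y) (g y)) (cross3 f' (g x) + cross3 (f x) g') x := by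
  rw [add_comm]
  exact crossCLM.hasDerivAt_of_bilinear (fun _ => hf) fun _ => hg

lemma eq_zero_of_cross3_eq_zero_of_inner_eq_zero {a b : E3} (ha : a ≠ 0) (hc : cross3 a b = 0)
    (hi : ⟪a, b⟫_ℝ = 0) : b = 0 := by
  simpa [hc, hi, ha] using norm_cross3_sq_add_inner_sq a b

lemma abs_inner_cross3_le (a b c : E3) : |⟪a, cross3 b c⟫_ℝ| ≤ ‖a‖ * (‖b‖ * ‖c‖) :=
  (abs_real_inner_le_norm _ _).trans (by gcongr; exact norm_cross3_le b c)

lemma norm_sq_mul_inner_cross3 (a b c d : E3) :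
    ‖a‖ ^ 2 * ⟪b, cross3 c d⟫_ℝ =
      ⟪a, b⟫_ℝ * ⟪a, cross3 c d⟫_ℝ + ⟪a, d⟫_ℝ * ⟪b, cross3 c a⟫_ℝ +
        ⟪a, c⟫_ℝ * ⟪b, cross3 a d⟫_ℝ := by
  simp only [← real_inner_self_eq_norm_sq, inner_eq_sum_three, cross3_apply_zero,
    cross3_apply_one, cross3_apply_two]
  ring

end CrossProduct

section Calculus

variable {E F G : Type*} [NormedAddCommGroup E] [NormedSpace ℝ E] [NormedAddCommGroup F]
  [NormedSpace ℝ F] [NormedAddCommGroup G] [NormedSpace ℝ G]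

lemma hasDerivAt_iteratedDeriv {n : ℕ∞ω} {f : ℝ → E} (hf : ContDiff ℝ n f) {i : ℕ} (hi : i < n)
    (x : ℝ) : HasDerivAt (iteratedDeriv i f) (iteratedDeriv (i + 1) f x) x := by
  rw [iteratedDeriv_succ]
  exact (hf.differentiable_iteratedDeriv i hi x).hasDerivAt

theorem iteratedDeriv_bilinear {n : ℕ} (B : E →L[ℝ] F →L[ℝ] G) {f : ℝ → E} {g : ℝ → F}
    (hf : ContDiff ℝ n f) (hg : ContDiff ℝ n g) (x : ℝ) :
    iteratedDeriv n (fun y => B (f y) (g y)) x =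
      ∑ i ∈ range (n + 1), n.choose i • B (iteratedDeriv i f x) (iteratedDeriv (n - i) g x) := by
  induction n generalizing x with
  | zero => simp
  | succ n ih =>
    rw [iteratedDeriv_succ, funext (ih (hf.of_le (by norm_cast; simp))
        (hg.of_le (by norm_cast; simp))),
      sum_choose_succ_nsmul fun i j => B (iteratedDeriv i f x) (iteratedDeriv j g x),
      ← sum_add_distrib]
    refine (HasDerivAt.fun_sum fun i hi => ?_).deriv
    have hi : i ≤ n := mem_range_succ_iff.1 hi
    rw [← smul_add, Nat.sub_add_comm hi]
    exact (B.hasDerivAt_of_bilinear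
      (fun _ => hasDerivAt_iteratedDeriv hf (by exact_mod_cast Nat.lt_succ_of_le hi) x)
      fun _ => hasDerivAt_iteratedDeriv hg (by exact_mod_cast Nat.lt_succ_of_le (n.sub_le i))
        x).const_smul (n.choose i)

theorem norm_sum_choose_nsmul_le {n : ℕ} {s : Finset ℕ} (hs : s ⊆ range (n + 1)) {v : ℕ → E}
    {M : ℝ} (hM : 0 ≤ M) (hv : ∀ i ∈ s, ‖v i‖ ≤ M) :
    ‖∑ i ∈ s, n.choose i • v i‖ ≤ 2 ^ n * M :=
  calc ‖∑ i ∈ s, n.choose i • v i‖ ≤ ∑ i ∈ s, (n.choose i : ℝ) * M := by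
        refine norm_sum_le_of_le s fun i hi => ?_
        rw [← Nat.cast_smul_eq_nsmul ℝ, norm_smul, Real.norm_natCast]
        gcongr
        exact hv i hi
    _ ≤ ∑ i ∈ range (n + 1), (n.choose i : ℝ) * M :=
        sum_le_sum_of_subset_of_nonneg hs fun _ _ _ => by positivity
    _ = 2 ^ n * M := by
        rw [← sum_mul, ← Nat.cast_sum, Nat.sum_range_choose]; norm_num

theorem eqOn_iteratedDeriv_of_eqOn {s : Set ℝ} (hs : UniqueDiffOn ℝ s) {f g : ℝ → E}
    {n : ℕ} (hf : ContDiff ℝ n f) (hg : ContDiff ℝ n g) (h : EqOn f g s) :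
    EqOn (iteratedDeriv n f) (iteratedDeriv n g) s := fun x hx => by
  rw [← iteratedDerivWithin_eq_iteratedDeriv hs hf.contDiffAt hx,
    ← iteratedDerivWithin_eq_iteratedDeriv hs hg.contDiffAt hx]
  exact iteratedDerivWithin_congr h hx

theorem le_mul_exp_of_hasDerivAt_le {φ φ' : ℝ → ℝ} {a b K : ℝ}
    (hd : ∀ t ∈ Icc a b, HasDerivAt φ (φ' t) t) (hφ : ∀ t ∈ Icc a b, φ' t ≤ K * φ t) :
    ∀ t ∈ Icc a b, φ t ≤ φ a * Real.exp (K * (t - a)) := by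
  simp_rw [← gronwallBound_ε0]
  refine le_gronwallBound_of_liminf_deriv_right_le
    (fun t ht => (hd t ht).continuousAt.continuousWithinAt) (f' := φ')
    (fun t ht r hr => (hd t ⟨ht.1, ht.2.le⟩).hasDerivWithinAt.liminf_right_slope_le hr) le_rfl
    (fun t ht => by simpa using hφ t ⟨ht.1, ht.2.le⟩)

theorem hasDerivAt_integral_of_continuous {a b : ℝ} {g g' : ℝ → ℝ → E}
    (hg : Continuous fun p : ℝ × ℝ => g p.1 p.2) (hg' : Continuous fun p : ℝ × ℝ => g' p.1 p.2)
    (hd : ∀ x t, HasDerivAt (g x) (g' x t) t) (t : ℝ) :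
    HasDerivAt (fun s => ∫ x in a..b, g x s) (∫ x in a..b, g' x t) t := by
  obtain ⟨M, hM⟩ := (isCompact_uIcc.prod (isCompact_Icc (a := t - 1) (b := t + 1))
    ).exists_bound_of_continuousOn (s := uIcc a b ×ˢ Icc (t - 1) (t + 1)) hg'.continuousOn
  have slice {h : ℝ → ℝ → E} (hh : Continuous fun p : ℝ × ℝ => h p.1 p.2) (s : ℝ) :
      Continuous fun x => h x s :=
    hh.comp (Continuous.prodMk_left s)
  exact (intervalIntegral.hasDerivAt_integral_of_dominated_loc_of_deriv_le
    (F := fun s x => g x s) (F' := fun s x => g' x s) (bound := fun _ => M)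
    (Icc_mem_nhds (sub_one_lt t) (lt_add_one t))
    (.of_forall fun s => (slice hg s).aestronglyMeasurable)
    ((slice hg t).intervalIntegrable _ _) (slice hg' t).aestronglyMeasurable
    (.of_forall fun x hx s hs => hM (x, s) ⟨uIoc_subset_uIcc hx, hs⟩) (by simp)
    (.of_forall fun x _ s _ => hd x s)).2

end Calculus

section Sobolev

variable {E : Type*} [NormedAddCommGroup E] [InnerProductSpace ℝ E]

lemma abs_two_mul_inner_le (v w : E) {ε : ℝ} (hε : 0 < ε) :
    |2 * ⟪v, w⟫_ℝ| ≤ ε⁻¹ * ‖v‖ ^ 2 + ε * ‖w‖ ^ 2 := by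
  have amgm : 0 ≤ ε * (ε⁻¹ * ‖v‖ - ‖w‖) ^ 2 := by positivity
  have expand : ε * (ε⁻¹ * ‖v‖ - ‖w‖) ^ 2 =
      ε⁻¹ * ‖v‖ ^ 2 + ε * ‖w‖ ^ 2 - 2 * (‖v‖ * ‖w‖) := by
    field_simp; ring
  rw [abs_mul, abs_two]
  linarith [abs_real_inner_le_norm v w]

lemma norm_sq_le_norm_sq_add_integral {f f' : ℝ → E} (hf : ∀ x, HasDerivAt f (f' x) x)
    (hf' : Continuous f') {a b ε : ℝ} (hε : 0 < ε) {x y : ℝ} (hx : x ∈ Icc a b)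
    (hy : y ∈ Icc a b) :
    ‖f x‖ ^ 2 ≤ ‖f y‖ ^ 2 + ∫ z in a..b, (ε⁻¹ * ‖f z‖ ^ 2 + ε * ‖f' z‖ ^ 2) := by
  have hab : a ≤ b := hx.1.trans hx.2
  have hfc : Continuous f := continuous_iff_continuousAt.2 fun x => (hf x).continuousAt
  have hG : Continuous fun z => ε⁻¹ * ‖f z‖ ^ 2 + ε * ‖f' z‖ ^ 2 := by fun_prop
  have ftc : ∫ z in y..x, 2 * ⟪f z, f' z⟫_ℝ = ‖f x‖ ^ 2 - ‖f y‖ ^ 2 :=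
    intervalIntegral.integral_eq_sub_of_hasDerivAt (fun z _ => (hf z).norm_sq)
      (Continuous.intervalIntegrable (by fun_prop) _ _)
  have bound : |∫ z in y..x, 2 * ⟪f z, f' z⟫_ℝ| ≤
      |∫ z in y..x, (ε⁻¹ * ‖f z‖ ^ 2 + ε * ‖f' z‖ ^ 2)| := by
    rw [← Real.norm_eq_abs]
    exact intervalIntegral.norm_integral_le_abs_of_norm_le
      (.of_forall fun z => abs_two_mul_inner_le (f z) (f' z) hε) (hG.intervalIntegrable _ _)
  have mono : |∫ z in y..x, (ε⁻¹ * ‖f z‖ ^ 2 + ε * ‖f' z‖ ^ 2)| ≤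
      |∫ z in a..b, (ε⁻¹ * ‖f z‖ ^ 2 + ε * ‖f' z‖ ^ 2)| := by
    refine intervalIntegral.abs_integral_mono_interval ?_
      (.of_forall fun z => by simp only [Pi.zero_apply]; positivity) (hG.intervalIntegrable _ _)
    rw [uIoc_of_le hab]
    exact Ioc_subset_Ioc (le_min hy.1 hx.1) (max_le hy.2 hx.2)
  have nonneg : 0 ≤ ∫ z in a..b, (ε⁻¹ * ‖f z‖ ^ 2 + ε * ‖f' z‖ ^ 2) :=
    intervalIntegral.integral_nonneg hab fun z _ => by positivity
  rw [ftc] at bound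
  rw [abs_of_nonneg nonneg] at mono
  linarith [le_abs_self (‖f x‖ ^ 2 - ‖f y‖ ^ 2)]

theorem norm_sq_le_integral_norm_sq_add {f f' : ℝ → E} (hf : ∀ x, HasDerivAt f (f' x) x)
    (hf' : Continuous f') {a b ε : ℝ} (hab : a < b) (hε : 0 < ε) {x : ℝ} (hx : x ∈ Icc a b) :
    ‖f x‖ ^ 2 ≤ ((b - a)⁻¹ + ε⁻¹) * (∫ y in a..b, ‖f y‖ ^ 2) + ε * ∫ y in a..b, ‖f' y‖ ^ 2 := by
  have hfc : Continuous f := continuous_iff_continuousAt.2 fun x => (hf x).continuousAt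
  have hint {g : ℝ → E} (hg : Continuous g) (c : ℝ) :
      IntervalIntegrable (fun z => c * ‖g z‖ ^ 2) volume a b :=
    Continuous.intervalIntegrable (by fun_prop) _ _
  have average := intervalIntegral.integral_mono_on hab.le
    (f := fun _ => ‖f x‖ ^ 2) (μ := volume) (by simp)
    (Continuous.intervalIntegrable (by fun_prop) _ _)
    fun y hy => norm_sq_le_norm_sq_add_integral hf hf' hε hx hy
  rw [intervalIntegral.integral_add (by simpa using hint hfc 1) (by simp),
    intervalIntegral.integral_add (hint hfc _) (hint hf' _)] at average
  simp only [intervalIntegral.integral_const, intervalIntegral.integral_const_mul,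
    smul_eq_mul] at average
  have hba : 0 < b - a := sub_pos.2 hab
  refine le_of_mul_le_mul_left (average.trans_eq ?_) hba
  field_simp
  ring

end Sobolev

section Jets

variable {E : Type*} [NormedAddCommGroup E] [NormedSpace ℝ E]

/-- The sequence of all derivatives of a curve at a point. Pointwise estimates are stated for
arbitrary sequences `a : ℕ → E` and applied to jets. -/
def jet (f : ℝ → E) (x : ℝ) (j : ℕ) : E := iteratedDeriv j f x

lemma hasDerivAt_jet {f : ℝ → E} (hf : ContDiff ℝ ∞ f) (j : ℕ) (x : ℝ) :
    HasDerivAt (fun y => jet f y j) (jet f x (j + 1)) x :=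
  hasDerivAt_iteratedDeriv hf (by exact_mod_cast WithTop.coe_lt_top _) x

lemma continuous_jet {f : ℝ → E} (hf : ContDiff ℝ ∞ f) (j : ℕ) :
    Continuous fun x => jet f x j :=
  hf.continuous_iteratedDeriv j (by exact_mod_cast le_top)

end Jets

section ControlledJets

variable {E : Type*} [SeminormedAddCommGroup E]

/-- The size which Sobolev's inequality gives to the derivatives of order less than `m` of a curve
bounded in `H^(m-1)`; here `ζ` stands for the `L²` norm of the derivative of order `m`. -/
structure IsControlledJet (m : ℕ) (κ ζ : ℝ) (a : ℕ → E) : Prop where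
  one_le : 1 ≤ κ
  norm_le : ∀ j, j + 2 ≤ m → ‖a j‖ ≤ κ
  norm_le_mul : ∀ j < m, ‖a j‖ ≤ κ * ζ

/-- The density `‖a m‖² + ζ² ∑_{j<m} ‖a j‖²` dominating all error terms of the energy estimate of
order `m`. -/
def jetEnergy (m : ℕ) (ζ : ℝ) (a : ℕ → E) : ℝ :=
  ‖a m‖ ^ 2 + ζ ^ 2 * ∑ j ∈ range m, ‖a j‖ ^ 2

lemma norm_sq_le_jetEnergy (m : ℕ) (ζ : ℝ) (a : ℕ → E) : ‖a m‖ ^ 2 ≤ jetEnergy m ζ a :=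
  le_add_of_nonneg_right (by positivity)

lemma jetEnergy_nonneg (m : ℕ) (ζ : ℝ) (a : ℕ → E) : 0 ≤ jetEnergy m ζ a :=
  (sq_nonneg _).trans (norm_sq_le_jetEnergy m ζ a)

namespace IsControlledJet

variable {m : ℕ} {κ ζ : ℝ} {a : ℕ → E} (hc : IsControlledJet m κ ζ a)
include hc

lemma norm_top_mul_norm_mul_norm_le {i j : ℕ} (hi : i < m) (hj : j < m) :
    ‖a m‖ * (‖a i‖ * ‖a j‖) ≤ κ * jetEnergy m ζ a := by
  have hκ : 0 ≤ κ := zero_le_one.trans hc.one_le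
  have hsum : ‖a i‖ ^ 2 ≤ ∑ j ∈ range m, ‖a j‖ ^ 2 :=
    single_le_sum (f := fun j => ‖a j‖ ^ 2) (fun _ _ => by positivity) (mem_range.2 hi)
  calc ‖a m‖ * (‖a i‖ * ‖a j‖) ≤ ‖a m‖ * (‖a i‖ * (κ * ζ)) := by gcongr; exact hc.norm_le_mul j hj
    _ = κ * (‖a m‖ * (ζ * ‖a i‖)) := by ring
    _ ≤ κ * (‖a m‖ ^ 2 + ζ ^ 2 * ‖a i‖ ^ 2) := by
        gcongr; nlinarith [sq_nonneg (‖a m‖ - ζ * ‖a i‖)]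
    _ ≤ κ * jetEnergy m ζ a := by unfold jetEnergy; gcongr

lemma norm_one_mul_norm_top_mul_le {i j : ℕ} (hm : 3 ≤ m) (hi : 1 ≤ i) (hj : 1 ≤ j)
    (hij : i + j = m + 1) :
    ‖a 1‖ * ‖a m‖ * (‖a i‖ * ‖a j‖) ≤ κ ^ 2 * jetEnergy m ζ a := by
  have hκ : 0 ≤ κ := zero_le_one.trans hc.one_le
  have hκ1 : ‖a 1‖ ≤ κ := hc.norm_le 1 hm
  have top : ‖a 1‖ * ‖a m‖ * (‖a 1‖ * ‖a m‖) ≤ κ ^ 2 * jetEnergy m ζ a :=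
    calc ‖a 1‖ * ‖a m‖ * (‖a 1‖ * ‖a m‖) = ‖a 1‖ ^ 2 * ‖a m‖ ^ 2 := by ring
      _ ≤ κ ^ 2 * jetEnergy m ζ a := by gcongr; exact norm_sq_le_jetEnergy m ζ a
  obtain rfl | hi := hi.eq_or_lt
  · rwa [show j = m by lia]
  obtain rfl | hj := hj.eq_or_lt
  · rwa [show i = m by lia, mul_comm ‖a m‖ ‖a 1‖]
  calc ‖a 1‖ * ‖a m‖ * (‖a i‖ * ‖a j‖) = ‖a 1‖ * (‖a m‖ * (‖a i‖ * ‖a j‖)) := by ring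
    _ ≤ κ * (κ * jetEnergy m ζ a) :=
        mul_le_mul hκ1 (hc.norm_top_mul_norm_mul_norm_le (by lia) (by lia)) (by positivity) hκ
    _ = κ ^ 2 * jetEnergy m ζ a := by ring

lemma norm_two_mul_norm_top_mul_le {i j : ℕ} (hm : 2 < m) (hi : 1 ≤ i) (hj : 1 ≤ j)
    (hij : i + j = m) :
    ‖a 2‖ * ‖a m‖ * (‖a i‖ * ‖a j‖) ≤ κ ^ 2 * jetEnergy m ζ a := by
  wlog hle : i ≤ j generalizing i j
  · rw [mul_comm ‖a i‖]
    exact this hj hi (by lia) (by lia)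
  have hκ : 0 ≤ κ := zero_le_one.trans hc.one_le
  calc ‖a 2‖ * ‖a m‖ * (‖a i‖ * ‖a j‖) = ‖a i‖ * (‖a m‖ * (‖a 2‖ * ‖a j‖)) := by ring
    _ ≤ κ * (κ * jetEnergy m ζ a) :=
        mul_le_mul (hc.norm_le i (by lia)) (hc.norm_top_mul_norm_mul_norm_le hm (by lia))
          (by positivity) hκ
    _ = κ ^ 2 * jetEnergy m ζ a := by ring

end IsControlledJet

end ControlledJets

section UnitJets

variable {E : Type*} [NormedAddCommGroup E] [InnerProductSpace ℝ E]

/-- The algebraic constraints which `‖f‖ = 1` imposes on the jet of a curve `f`. -/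
structure IsUnitJet (a : ℕ → E) : Prop where
  norm_zero : ‖a 0‖ = 1
  sum_inner_eq_zero : ∀ n, n ≠ 0 → ∑ i ∈ range (n + 1), n.choose i • ⟪a i, a (n - i)⟫_ℝ = 0

theorem isUnitJet_jet {f : ℝ → E} (hf : ContDiff ℝ ∞ f) {s : Set ℝ} (hs : UniqueDiffOn ℝ s)
    (hunit : ∀ x ∈ s, ‖f x‖ = 1) {x : ℝ} (hx : x ∈ s) : IsUnitJet (jet f x) where
  norm_zero := by simpa [jet] using hunit x hx
  sum_inner_eq_zero n hn := by
    have hfn : ContDiff ℝ n f := contDiff_infty.1 hf n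
    have hconst : EqOn (fun y => innerSL ℝ (f y) (f y)) (fun _ => (1 : ℝ)) s := fun y hy => by
      simp [hunit y hy]
    have hderiv : iteratedDeriv n (fun y => innerSL ℝ (f y) (f y)) x = 0 :=
      (eqOn_iteratedDeriv_of_eqOn hs (hfn.inner ℝ hfn) contDiff_const hconst hx).trans
        (by simp [iteratedDeriv_const, hn])
    rwa [iteratedDeriv_bilinear _ hfn hfn] at hderiv

namespace IsUnitJet

variable {a : ℕ → E} (ha : IsUnitJet a)
include ha

lemma two_mul_inner_zero {n : ℕ} (hn : n ≠ 0) :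
    2 * ⟪a 0, a n⟫_ℝ = -∑ i ∈ Ico 1 n, n.choose i • ⟪a i, a (n - i)⟫_ℝ := by
  have h := ha.sum_inner_eq_zero n hn
  rw [sum_range_succ, range_eq_Ico, sum_eq_sum_Ico_succ_bot (by lia)] at h
  simp only [Nat.choose_zero_right, Nat.choose_self, Nat.sub_zero, Nat.sub_self, one_smul,
    real_inner_comm (a 0) (a n), zero_add] at h
  linarith

lemma inner_zero_one : ⟪a 0, a 1⟫_ℝ = 0 := by
  simpa using ha.two_mul_inner_zero one_ne_zero

lemma inner_zero_two : ⟪a 0, a 2⟫_ℝ = -⟪a 1, a 1⟫_ℝ := by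
  have h := ha.two_mul_inner_zero two_ne_zero
  simp only [Nat.Ico_succ_singleton, nsmul_eq_mul, sum_singleton, Nat.choose_succ_self_right,
    Nat.reduceAdd, Nat.cast_ofNat, Nat.add_one_sub_one] at h
  linarith

lemma inner_zero_three : ⟪a 0, a 3⟫_ℝ = -3 * ⟪a 1, a 2⟫_ℝ := by
  have h := ha.two_mul_inner_zero three_ne_zero
  simp only [nsmul_eq_mul, sum_Ico_eq_sum_range, Nat.add_one_sub_one, sum_range_succ,
    Finset.range_one, sum_singleton, Nat.choose, add_zero, Nat.reduceAdd, Nat.cast_ofNat,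
    Nat.reduceSub, real_inner_comm (a 1) (a 2)] at h
  linarith

lemma mul_abs_two_mul_inner_zero_le {n : ℕ} (hn : n ≠ 0) {c M : ℝ} (hc : 0 ≤ c) (hM : 0 ≤ M)
    (h : ∀ i ∈ Finset.Ico 1 n, c * (‖a i‖ * ‖a (n - i)‖) ≤ M) :
    c * |2 * ⟪a 0, a n⟫_ℝ| ≤ 2 ^ n * M :=
  calc c * |2 * ⟪a 0, a n⟫_ℝ|
      = ‖∑ i ∈ Finset.Ico 1 n, n.choose i • (c * ⟪a i, a (n - i)⟫_ℝ)‖ := by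
        simp_rw [ha.two_mul_inner_zero hn, abs_neg, ← mul_smul_comm, ← mul_sum, norm_mul,
          Real.norm_eq_abs, abs_of_nonneg hc]
    _ ≤ 2 ^ n * M := by
        refine norm_sum_choose_nsmul_le ?_ hM fun i hi => (h i hi).trans' ?_
        · rw [range_eq_Ico]
          exact Finset.Ico_subset_Ico zero_le_one n.le_succ
        · rw [norm_mul, Real.norm_of_nonneg hc]
          gcongr
          exact norm_inner_le_norm _ _

end IsUnitJet

end UnitJets

section Flux

/-- The derivative of order `m` of `f × f''`, expressed through the jet `a` of `f`. -/
def schrodingerJet (a : ℕ → E3) (m : ℕ) : E3 :=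
  ∑ i ∈ range (m + 1), m.choose i • cross3 (a i) (a (m - i + 2))

/-- The jet of `f` paired with the equation `∂ₜf = f × f''` differentiated `m` times is, up to lower
order terms, the derivative of this boundary flux; its second term compensates for
`⟪f⁽ᵐ⁾, f' × f⁽ᵐ⁺¹⁾⟫`. -/
def flux (c : ℝ) (m : ℕ) (a : ℕ → E3) : ℝ :=
  ⟪a m, cross3 (a 0) (a (m + 1))⟫_ℝ + c * (⟪a 0, a m⟫_ℝ * ⟪a 0, cross3 (a 1) (a m)⟫_ℝ)

/-- The derivative of `flux c m (jet f x)` in `x`, expressed through the jet `a` of `f`. -/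
def fluxDeriv (c : ℝ) (m : ℕ) (a : ℕ → E3) : ℝ :=
  ⟪a m, cross3 (a 1) (a (m + 1)) + cross3 (a 0) (a (m + 2))⟫_ℝ +
    c * ((⟪a 1, a m⟫_ℝ + ⟪a 0, a (m + 1)⟫_ℝ) * ⟪a 0, cross3 (a 1) (a m)⟫_ℝ +
      ⟪a 0, a m⟫_ℝ * ⟪a 0, cross3 (a 2) (a m) + cross3 (a 1) (a (m + 1))⟫_ℝ)

lemma hasDerivAt_flux {f : ℝ → E3} (hf : ContDiff ℝ ∞ f) (c : ℝ) (m : ℕ) (x : ℝ) :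
    HasDerivAt (fun y => flux c m (jet f y)) (fluxDeriv c m (jet f x)) x := by
  have hd := fun j => hasDerivAt_jet hf j x
  have main := (hd m).inner ℝ (hasDerivAt_cross3 (hd 0) (hd (m + 1)))
  have correction := ((hd 0).inner ℝ (hd m)).mul
    ((hd 0).inner ℝ (hasDerivAt_cross3 (hd 1) (hd m)))
  convert! main.add (correction.const_mul c) using 1
  simp only [fluxDeriv, inner_add_right, inner_cross3_self_right, inner_cross3_self_left]
  ring

lemma flux_eq_zero {a : ℕ → E3} (ha : ∀ l, Odd l → a l = 0) (c : ℝ) (m : ℕ) :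
    flux c m a = 0 := by
  have h1 : a 1 = 0 := ha 1 odd_one
  obtain hm | hm := m.even_or_odd
  · simp [flux, ha (m + 1) hm.add_one, h1, ← crossCLM_apply]
  · simp [flux, ha m hm, h1, ← crossCLM_apply]

lemma continuous_fluxDeriv {f : ℝ → E3} (hf : ContDiff ℝ ∞ f) (c : ℝ) (m : ℕ) :
    Continuous fun x => fluxDeriv c m (jet f x) := by
  have := continuous_jet hf
  simp only [fluxDeriv, ← crossCLM_apply]
  fun_prop

lemma continuous_schrodingerJet {f : ℝ → E3} (hf : ContDiff ℝ ∞ f) (m : ℕ) :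
    Continuous fun x => schrodingerJet (jet f x) m := by
  have := continuous_jet hf
  simp only [schrodingerJet, ← crossCLM_apply]
  fun_prop

lemma integral_fluxDeriv_eq_zero {f : ℝ → E3} (hf : ContDiff ℝ ∞ f) {x y : ℝ}
    (hx : ∀ l, Odd l → jet f x l = 0) (hy : ∀ l, Odd l → jet f y l = 0) (c : ℝ) (m : ℕ) :
    ∫ z in x..y, fluxDeriv c m (jet f z) = 0 := by
  rw [intervalIntegral.integral_eq_sub_of_hasDerivAt (fun z _ => hasDerivAt_flux hf c m z)
    ((continuous_fluxDeriv hf c m).intervalIntegrable _ _), flux_eq_zero hx, flux_eq_zero hy,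
    sub_zero]

end Flux

section PointwiseEnergy

/-- The terms of `schrodingerJet a m` in which both factors carry at least two derivatives. -/
def crossRemainder (a : ℕ → E3) (m : ℕ) : E3 :=
  ∑ i ∈ Finset.Ico 2 (m + 1), m.choose i • cross3 (a i) (a (m - i + 2))

lemma schrodingerJet_eq (a : ℕ → E3) {m : ℕ} (hm : m ≠ 0) :
    schrodingerJet a m = cross3 (a 0) (a (m + 2)) + (m : ℝ) • cross3 (a 1) (a (m + 1)) +
      crossRemainder a m := by
  rw [schrodingerJet, range_eq_Ico, sum_eq_sum_Ico_succ_bot m.succ_pos,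
    sum_eq_sum_Ico_succ_bot (by lia), ← add_assoc, Nat.cast_smul_eq_nsmul,
    show m - (0 + 1) + 2 = m + 1 by lia]
  simp only [Nat.choose_zero_right, one_smul, Nat.sub_zero, zero_add, Nat.choose_one_right,
    crossRemainder]

namespace IsUnitJet

variable {a : ℕ → E3} (ha : IsUnitJet a)
include ha

/-- Since `a 1` is orthogonal to `a 0`, the top order term `⟪a m, a 1 × a (m + 1)⟫` only sees the
components of `a m` and `a (m + 1)` along `a 0`. -/
lemma inner_cross3_one_succ (m : ℕ) :
    ⟪a m, cross3 (a 1) (a (m + 1))⟫_ℝ =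
      ⟪a 0, a m⟫_ℝ * ⟪a 0, cross3 (a 1) (a (m + 1))⟫_ℝ -
        ⟪a 0, a (m + 1)⟫_ℝ * ⟪a 0, cross3 (a 1) (a m)⟫_ℝ := by
  have h := norm_sq_mul_inner_cross3 (a 0) (a m) (a 1) (a (m + 1))
  rw [ha.norm_zero, ha.inner_zero_one, inner_cross3_swap_outer (a m) (a 1) (a 0)] at h
  linarith

lemma inner_schrodingerJet_sub_fluxDeriv {m : ℕ} (hm : m ≠ 0) :
    ⟪a m, schrodingerJet a m⟫_ℝ - fluxDeriv (m - 1) m a =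
      ⟪a m, crossRemainder a m⟫_ℝ -
        (m - 1) * ((2 * ⟪a 0, a (m + 1)⟫_ℝ + ⟪a 1, a m⟫_ℝ) * ⟪a 0, cross3 (a 1) (a m)⟫_ℝ +
          ⟪a 0, a m⟫_ℝ * ⟪a 0, cross3 (a 2) (a m)⟫_ℝ) := by
  simp only [schrodingerJet_eq a hm, fluxDeriv, inner_add_right, inner_smul_right,
    ha.inner_cross3_one_succ m]
  ring

lemma inner_schrodingerJet_one : ⟪a 1, schrodingerJet a 1⟫_ℝ = fluxDeriv 0 1 a := by
  simpa [crossRemainder, sub_eq_zero] using ha.inner_schrodingerJet_sub_fluxDeriv one_ne_zero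

/-- Pointwise form of the conservation of `∫ ‖u_xx‖² - (5/4) ‖u_x‖⁴`. -/
lemma inner_schrodingerJet_two :
    2 * ⟪a 2, schrodingerJet a 2⟫_ℝ - 5 * (‖a 1‖ ^ 2 * ⟪a 1, schrodingerJet a 1⟫_ℝ) =
      2 * fluxDeriv (-3 / 2) 2 a := by
  have second := ha.inner_schrodingerJet_sub_fluxDeriv two_ne_zero
  have first : ⟪a 1, schrodingerJet a 1⟫_ℝ = -⟪a 0, cross3 (a 1) (a 3)⟫_ℝ := by
    rw [schrodingerJet_eq a one_ne_zero, ← inner_cross3_swap_left]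
    simp [inner_add_right, inner_cross3_self_left, crossRemainder]
  have remainder : crossRemainder a 2 = 0 := by simp [crossRemainder, cross3_self]
  simp only [remainder, fluxDeriv, cross3_self, inner_zero_right, inner_add_right,
    ha.inner_zero_two, ha.inner_zero_three, real_inner_self_eq_norm_sq] at second ⊢
  rw [first]
  ring_nf at second ⊢
  linarith

end IsUnitJet

end PointwiseEnergy

section PointwiseEnergyEstimate

variable {a : ℕ → E3} {m : ℕ} {κ ζ : ℝ}

lemma IsControlledJet.abs_inner_crossRemainder_le (hc : IsControlledJet m κ ζ a) :
    |⟪a m, crossRemainder a m⟫_ℝ| ≤ 2 ^ m * (κ * jetEnergy m ζ a) := by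
  have hκ : 0 ≤ κ * jetEnergy m ζ a :=
    mul_nonneg (zero_le_one.trans hc.one_le) (jetEnergy_nonneg m ζ a)
  rw [← innerSL_apply_apply ℝ, crossRemainder, map_sum]
  simp only [map_nsmul, innerSL_apply_apply]
  refine norm_sum_choose_nsmul_le (v := fun i => ⟪a m, cross3 (a i) (a (m - i + 2))⟫_ℝ)
    (by rw [range_eq_Ico]; exact Finset.Ico_subset_Ico (Nat.zero_le 2) le_rfl) hκ fun i hi => ?_
  obtain ⟨h2, him⟩ := Finset.mem_Ico.1 hi
  obtain rfl | h2 := h2.eq_or_lt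
  · simpa [Nat.sub_add_cancel (show 2 ≤ m by lia), inner_cross3_self_right] using hκ
  obtain rfl | him := (Nat.lt_succ_iff.1 him).eq_or_lt
  · simpa [inner_cross3_self_left] using hκ
  exact (abs_inner_cross3_le _ _ _).trans (hc.norm_top_mul_norm_mul_norm_le him (by lia))

lemma IsUnitJet.abs_inner_zero_cross3_le (ha : IsUnitJet a) (b c : E3) :
    |⟪a 0, cross3 b c⟫_ℝ| ≤ ‖b‖ * ‖c‖ := by
  simpa [ha.norm_zero] using abs_inner_cross3_le (a 0) b c

lemma IsUnitJet.abs_two_mul_inner_zero_mul_inner_cross3_le (ha : IsUnitJet a) {n : ℕ} (hn : n ≠ 0)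
    {b c : E3} {M : ℝ} (hM : 0 ≤ M)
    (h : ∀ i ∈ Finset.Ico 1 n, ‖b‖ * ‖c‖ * (‖a i‖ * ‖a (n - i)‖) ≤ M) :
    |2 * ⟪a 0, a n⟫_ℝ * ⟪a 0, cross3 b c⟫_ℝ| ≤ 2 ^ n * M := by
  rw [abs_mul, mul_comm]
  exact (mul_le_mul_of_nonneg_right (ha.abs_inner_zero_cross3_le b c) (abs_nonneg _)).trans
    (ha.mul_abs_two_mul_inner_zero_le hn (by positivity) hM h)

theorem IsUnitJet.abs_inner_schrodingerJet_sub_fluxDeriv_le (ha : IsUnitJet a)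
    (hc : IsControlledJet m κ ζ a) (hm : 3 ≤ m) :
    |⟪a m, schrodingerJet a m⟫_ℝ - fluxDeriv (m - 1) m a| ≤
      m * 2 ^ (m + 2) * (κ ^ 2 * jetEnergy m ζ a) := by
  have hκ : κ ≤ κ ^ 2 := le_self_pow₀ hc.one_le two_ne_zero
  set X := κ ^ 2 * jetEnergy m ζ a
  have hX : 0 ≤ X := mul_nonneg (sq_nonneg κ) (jetEnergy_nonneg m ζ a)
  have remainder : |⟪a m, crossRemainder a m⟫_ℝ| ≤ 2 ^ m * X :=
    hc.abs_inner_crossRemainder_le.trans <| mul_le_mul_of_nonneg_left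
      (mul_le_mul_of_nonneg_right hκ (jetEnergy_nonneg m ζ a)) (by positivity)
  have first : |2 * ⟪a 0, a (m + 1)⟫_ℝ * ⟪a 0, cross3 (a 1) (a m)⟫_ℝ| ≤ 2 ^ (m + 1) * X := by
    refine ha.abs_two_mul_inner_zero_mul_inner_cross3_le m.succ_ne_zero hX fun i hi => ?_
    obtain ⟨hi1, him⟩ := Finset.mem_Ico.1 hi
    exact hc.norm_one_mul_norm_top_mul_le hm hi1 (by lia) (by lia)
  have second : |⟪a 1, a m⟫_ℝ * ⟪a 0, cross3 (a 1) (a m)⟫_ℝ| ≤ X := by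
    rw [abs_mul]
    exact (mul_le_mul (abs_real_inner_le_norm _ _) (ha.abs_inner_zero_cross3_le _ _)
      (by positivity) (by positivity)).trans
      (hc.norm_one_mul_norm_top_mul_le hm le_rfl (by lia) (add_comm 1 m))
  have third : |2 * ⟪a 0, a m⟫_ℝ * ⟪a 0, cross3 (a 2) (a m)⟫_ℝ| ≤ 2 ^ m * X := by
    refine ha.abs_two_mul_inner_zero_mul_inner_cross3_le (by lia) hX fun i hi => ?_
    obtain ⟨hi1, him⟩ := Finset.mem_Ico.1 hi
    exact hc.norm_two_mul_norm_top_mul_le hm hi1 (by lia) (by lia)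
  have hm1 : (0 : ℝ) ≤ m - 1 := by
    have : (3 : ℝ) ≤ m := by exact_mod_cast hm
    linarith
  have hpow : X ≤ 2 ^ m * X := le_mul_of_one_le_left hX (one_le_pow₀ one_le_two)
  rw [ha.inner_schrodingerJet_sub_fluxDeriv (by lia)]
  calc _ ≤ |⟪a m, crossRemainder a m⟫_ℝ| + |_| := abs_sub _ _
    _ ≤ 2 ^ m * X + (m - 1) * (2 ^ (m + 1) * X + X + 2 ^ m * X) := by
        rw [abs_mul, abs_of_nonneg hm1]
        gcongr
        rw [abs_le] at *
        constructor <;> linarith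
    _ ≤ m * 2 ^ (m + 2) * X := by
        rw [pow_succ, pow_add]
        linarith [mul_le_mul_of_nonneg_left hpow hm1]

end PointwiseEnergyEstimate

section Energy

/-- A smooth curve which on `[0, 1]` takes values in the unit sphere and whose derivatives of odd
order vanish at both end points, as those of a Neumann solution do at each time. -/
structure IsNeumannSphereCurve (f : ℝ → E3) : Prop where
  contDiff : ContDiff ℝ ∞ f
  norm_eq_one : ∀ x ∈ Icc (0 : ℝ) 1, ‖f x‖ = 1
  jet_zero : ∀ l, Odd l → jet f 0 l = 0
  jet_one : ∀ l, Odd l → jet f 1 l = 0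

lemma L2sq_nonneg (f : ℝ → E3) : 0 ≤ L2sq f :=
  intervalIntegral.integral_nonneg zero_le_one fun _ _ => by positivity

lemma norm_jet_sq_le {f : ℝ → E3} (hf : ContDiff ℝ ∞ f) (j : ℕ) {x : ℝ} (hx : x ∈ Icc (0 : ℝ) 1) :
    ‖jet f x j‖ ^ 2 ≤ 2 * L2sq (jet f · j) + L2sq (jet f · (j + 1)) := by
  have sobolev := norm_sq_le_integral_norm_sq_add (hasDerivAt_jet hf j)
    (continuous_jet hf (j + 1)) zero_lt_one zero_lt_one hx
  rwa [sub_zero, inv_one, one_add_one_eq_two, one_mul] at sobolev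

lemma isControlledJet_jet {f : ℝ → E3} (hf : ContDiff ℝ ∞ f) {m : ℕ} {A : ℝ} (hA : 0 ≤ A)
    (hbound : ∀ j < m, L2sq (jet f · j) ≤ A) {x : ℝ} (hx : x ∈ Icc (0 : ℝ) 1) :
    IsControlledJet m (3 * A + 1) √(1 + L2sq (jet f · m)) (jet f x) where
  one_le := by linarith
  norm_le j hj := by
    refine le_of_sq_le_sq ?_ (by positivity)
    nlinarith [norm_jet_sq_le hf j hx, hbound j (by lia), hbound (j + 1) (by lia)]
  norm_le_mul j hj := by
    have hm : 0 ≤ L2sq (jet f · m) := L2sq_nonneg _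
    have hsucc : L2sq (jet f · (j + 1)) ≤ A + (1 + L2sq (jet f · m)) := by
      obtain h | rfl := (Nat.succ_le_of_lt hj).lt_or_eq
      · linarith [hbound (j + 1) h]
      · linarith
    refine le_of_sq_le_sq ?_ (by positivity)
    rw [mul_pow, Real.sq_sqrt (by positivity)]
    nlinarith [norm_jet_sq_le hf j hx, hbound j hj, mul_nonneg hA hm, sq_nonneg A,
      mul_nonneg (sq_nonneg A) hm]

lemma integral_jetEnergy {f : ℝ → E3} (hf : ContDiff ℝ ∞ f) (m : ℕ) (ζ : ℝ) :
    ∫ x in (0 : ℝ)..1, jetEnergy m ζ (jet f x) =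
      L2sq (jet f · m) + ζ ^ 2 * ∑ j ∈ range m, L2sq (jet f · j) := by
  have hcont := continuous_jet hf
  simp only [jetEnergy, L2sq]
  rw [intervalIntegral.integral_add (Continuous.intervalIntegrable (by fun_prop) _ _)
    (Continuous.intervalIntegrable (by fun_prop) _ _), intervalIntegral.integral_const_mul,
    intervalIntegral.integral_finsetSum
      fun j _ => Continuous.intervalIntegrable (by fun_prop) _ _]

namespace IsNeumannSphereCurve

variable {f : ℝ → E3} (hf : IsNeumannSphereCurve f)
include hf

lemma isUnitJet {x : ℝ} (hx : x ∈ Icc (0 : ℝ) 1) : IsUnitJet (jet f x) :=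
  isUnitJet_jet hf.contDiff (uniqueDiffOn_Icc zero_lt_one) hf.norm_eq_one hx

lemma integral_fluxDeriv (c : ℝ) (m : ℕ) :
    ∫ x in (0 : ℝ)..1, fluxDeriv c m (jet f x) = 0 :=
  integral_fluxDeriv_eq_zero hf.contDiff hf.jet_zero hf.jet_one c m

lemma integral_inner_schrodingerJet_one :
    ∫ x in (0 : ℝ)..1, ⟪jet f x 1, schrodingerJet (jet f x) 1⟫_ℝ = 0 := by
  refine (intervalIntegral.integral_congr fun x hx => ?_).trans (hf.integral_fluxDeriv 0 1)
  rw [Set.uIcc_of_le zero_le_one] at hx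
  exact (hf.isUnitJet hx).inner_schrodingerJet_one

lemma integral_inner_schrodingerJet_two :
    ∫ x in (0 : ℝ)..1, (2 * ⟪jet f x 2, schrodingerJet (jet f x) 2⟫_ℝ -
      5 * (‖jet f x 1‖ ^ 2 * ⟪jet f x 1, schrodingerJet (jet f x) 1⟫_ℝ)) = 0 := by
  calc _ = ∫ x in (0 : ℝ)..1, 2 * fluxDeriv (-3 / 2) 2 (jet f x) := by
        refine intervalIntegral.integral_congr fun x hx => ?_
        rw [Set.uIcc_of_le zero_le_one] at hx
        exact (hf.isUnitJet hx).inner_schrodingerJet_two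
    _ = 0 := by rw [intervalIntegral.integral_const_mul, hf.integral_fluxDeriv, mul_zero]

theorem integral_inner_schrodingerJet_le {m : ℕ} (hm : 3 ≤ m) {A : ℝ} (hA : 0 ≤ A)
    (hbound : ∀ j < m, L2sq (jet f · j) ≤ A) :
    ∫ x in (0 : ℝ)..1, ⟪jet f x m, schrodingerJet (jet f x) m⟫_ℝ ≤
      m * 2 ^ (m + 2) * (3 * A + 1) ^ 2 * (1 + m * A) * (1 + L2sq (jet f · m)) := by
  have hjet := continuous_jet hf.contDiff
  have hS := continuous_schrodingerJet hf.contDiff m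
  have hF := continuous_fluxDeriv hf.contDiff (m - 1) m
  set Z := 1 + L2sq (jet f · m)
  have hZ : 0 ≤ Z := add_nonneg zero_le_one (L2sq_nonneg _)
  have energy : ∫ x in (0 : ℝ)..1, jetEnergy m √Z (jet f x) ≤ (1 + m * A) * Z := by
    have hsum : ∑ j ∈ range m, L2sq (jet f · j) ≤ m * A := by
      simpa using sum_le_card_nsmul (range m) _ A fun j hj => hbound j (mem_range.1 hj)
    rw [integral_jetEnergy hf.contDiff, Real.sq_sqrt hZ]
    nlinarith
  calc ∫ x in (0 : ℝ)..1, ⟪jet f x m, schrodingerJet (jet f x) m⟫_ℝ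
      = ∫ x in (0 : ℝ)..1, (⟪jet f x m, schrodingerJet (jet f x) m⟫_ℝ -
          fluxDeriv (m - 1) m (jet f x)) := by
        rw [intervalIntegral.integral_sub (Continuous.intervalIntegrable (by fun_prop) _ _)
          (hF.intervalIntegrable _ _), hf.integral_fluxDeriv, sub_zero]
    _ ≤ ∫ x in (0 : ℝ)..1,
          m * 2 ^ (m + 2) * ((3 * A + 1) ^ 2 * jetEnergy m √Z (jet f x)) := by
        refine intervalIntegral.integral_mono_on zero_le_one
          (Continuous.intervalIntegrable (by fun_prop) _ _)
          (Continuous.intervalIntegrable (by unfold jetEnergy; fun_prop) _ _) fun x hx => ?_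
        exact (le_abs_self _).trans ((hf.isUnitJet hx).abs_inner_schrodingerJet_sub_fluxDeriv_le
          (isControlledJet_jet hf.contDiff hA hbound hx) hm)
    _ ≤ m * 2 ^ (m + 2) * ((3 * A + 1) ^ 2 * ((1 + m * A) * Z)) := by
        rw [intervalIntegral.integral_const_mul, intervalIntegral.integral_const_mul]
        gcongr
    _ = m * 2 ^ (m + 2) * (3 * A + 1) ^ 2 * (1 + m * A) * Z := by ring

end IsNeumannSphereCurve

end Energy

section Leibniz

variable {E F G ι : Type*} [NormedAddCommGroup E] [NormedSpace ℝ E] [NormedAddCommGroup F]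
  [NormedSpace ℝ F] [NormedAddCommGroup G] [NormedSpace ℝ G]

lemma eqOn_jet_sum_bilinear (B : E →L[ℝ] F →L[ℝ] G) {s : Set ℝ} (hs : UniqueDiffOn ℝ s)
    (J : Finset ι) (c : ι → ℕ) {f : ℝ → G} {g : ι → ℝ → E} {h : ι → ℝ → F}
    (hf : ContDiff ℝ ∞ f) (hg : ∀ k, ContDiff ℝ ∞ (g k)) (hh : ∀ k, ContDiff ℝ ∞ (h k))
    (heq : EqOn f (fun y => ∑ k ∈ J, c k • B (g k y) (h k y)) s) (n : ℕ) :
    EqOn (jet f · n) (fun y => ∑ k ∈ J, c k • ∑ i ∈ range (n + 1),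
      n.choose i • B (jet (g k) y i) (jet (h k) y (n - i))) s := by
  intro y hy
  have hB (k : ι) : ContDiff ℝ n fun z => B (g k z) (h k z) :=
    contDiff_infty.1 (B.isBoundedBilinearMap.contDiff.comp ((hg k).prodMk (hh k))) n
  have hterm (k : ι) : ContDiff ℝ n fun z => c k • B (g k z) (h k z) := (hB k).const_smul (c k)
  calc jet f y n = iteratedDeriv n (fun z => ∑ k ∈ J, c k • B (g k z) (h k z)) y :=
        eqOn_iteratedDeriv_of_eqOn hs (contDiff_infty.1 hf n)
          (ContDiff.sum fun k _ => hterm k) heq hy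
    _ = _ := by
        rw [iteratedDeriv_fun_sum fun k _ => (hterm k).contDiffAt]
        refine sum_congr rfl fun k _ => ?_
        rw [iteratedDeriv_fun_const_smul (hB k).contDiffAt,
          iteratedDeriv_bilinear _ (contDiff_infty.1 (hg k) n) (contDiff_infty.1 (hh k) n)]
        rfl

end Leibniz

section MixedDerivatives

variable {u : ℝ → ℝ → E3}

lemma hasDerivAt_fst (hu : ContDiff ℝ ∞ ↿u) (x t : ℝ) :
    HasDerivAt (u · t) (fderiv ℝ ↿u (x, t) (1, 0)) x :=
  HasFDerivAt.comp_hasDerivAt (f := fun y => (y, t)) x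
    (hu.differentiable (by simp) (x, t)).hasFDerivAt
    ((hasDerivAt_id x).prodMk (hasDerivAt_const x t))

lemma hasDerivAt_snd (hu : ContDiff ℝ ∞ ↿u) (x t : ℝ) :
    HasDerivAt (u x) (fderiv ℝ ↿u (x, t) (0, 1)) t :=
  HasFDerivAt.comp_hasDerivAt (f := fun s => (x, s)) t
    (hu.differentiable (by simp) (x, t)).hasFDerivAt
    ((hasDerivAt_const t x).prodMk (hasDerivAt_id t))

lemma uncurry_pdx (hu : ContDiff ℝ ∞ ↿u) : ↿(pdx u) = fun p => fderiv ℝ ↿u p (1, 0) :=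
  funext fun p => (hasDerivAt_fst hu p.1 p.2).deriv

lemma uncurry_pdt (hu : ContDiff ℝ ∞ ↿u) : ↿(pdt u) = fun p => fderiv ℝ ↿u p (0, 1) :=
  funext fun p => (hasDerivAt_snd hu p.1 p.2).deriv

lemma contDiff_pdx (hu : ContDiff ℝ ∞ ↿u) : ContDiff ℝ ∞ ↿(pdx u) := by
  rw [uncurry_pdx hu]
  exact (hu.fderiv_right (by simp)).clm_apply contDiff_const

lemma contDiff_pdt (hu : ContDiff ℝ ∞ ↿u) : ContDiff ℝ ∞ ↿(pdt u) := by
  rw [uncurry_pdt hu]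
  exact (hu.fderiv_right (by simp)).clm_apply contDiff_const

lemma hasDerivAt_pdt (hu : ContDiff ℝ ∞ ↿u) (x t : ℝ) : HasDerivAt (u x) (pdt u x t) t :=
  (hasDerivAt_snd hu x t).differentiableAt.hasDerivAt

theorem pdt_pdx (hu : ContDiff ℝ ∞ ↿u) : pdt (pdx u) = pdx (pdt u) := by
  funext x t
  have second (v : ℝ × ℝ) : fderiv ℝ (fun p => fderiv ℝ ↿u p v) (x, t) =
      (fderiv ℝ (fderiv ℝ ↿u) (x, t)).flip v := by
    have hd : Differentiable ℝ (fderiv ℝ ↿u) :=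
      (hu.fderiv_right (m := ∞) (by simp)).differentiable (by simp)
    simpa using ((hd (x, t)).hasFDerivAt.clm_apply (hasFDerivAt_const v (x, t))).fderiv
  have symm : IsSymmSndFDerivAt ℝ ↿u (x, t) :=
    hu.contDiffAt.isSymmSndFDerivAt (by
      rw [minSmoothness_of_isRCLikeNormedField]
      exact WithTop.coe_le_coe.2 le_top)
  calc pdt (pdx u) x t = fderiv ℝ ↿(pdx u) (x, t) (0, 1) :=
        congrFun (uncurry_pdt (contDiff_pdx hu)) (x, t)
    _ = fderiv ℝ ↿(pdt u) (x, t) (1, 0) := by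
        rw [uncurry_pdx hu, uncurry_pdt hu, second, second]
        exact symm (0, 1) (1, 0)
    _ = pdx (pdt u) x t := (congrFun (uncurry_pdx (contDiff_pdt hu)) (x, t)).symm

/-- The mixed partial derivative of `u` of order `i` in time and `j` in space. -/
def mixedDeriv (u : ℝ → ℝ → E3) (i j : ℕ) : ℝ → ℝ → E3 := pdx^[j] (pdt^[i] u)

lemma mixedDeriv_succ_right (u : ℝ → ℝ → E3) (i j : ℕ) :
    mixedDeriv u i (j + 1) = pdx (mixedDeriv u i j) :=
  Function.iterate_succ_apply' _ _ _

lemma contDiff_mixedDeriv (hu : ContDiff ℝ ∞ ↿u) (i j : ℕ) : ContDiff ℝ ∞ ↿(mixedDeriv u i j) := by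
  induction j with
  | zero =>
    induction i with
    | zero => exact hu
    | succ i ih =>
      simp only [mixedDeriv, Function.iterate_succ_apply']
      exact contDiff_pdt ih
  | succ j ih =>
    rw [mixedDeriv_succ_right]
    exact contDiff_pdx ih

lemma mixedDeriv_succ_left (hu : ContDiff ℝ ∞ ↿u) (i j : ℕ) :
    mixedDeriv u (i + 1) j = pdt (mixedDeriv u i j) := by
  induction j with
  | zero => exact Function.iterate_succ_apply' _ _ _
  | succ j ih =>
    rw [mixedDeriv_succ_right, ih, mixedDeriv_succ_right, pdt_pdx (contDiff_mixedDeriv hu i j)]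

lemma hasDerivAt_mixedDeriv_time (hu : ContDiff ℝ ∞ ↿u) (i j : ℕ) (x t : ℝ) :
    HasDerivAt (mixedDeriv u i j x) (mixedDeriv u (i + 1) j x t) t := by
  rw [mixedDeriv_succ_left hu]
  exact hasDerivAt_pdt (contDiff_mixedDeriv hu i j) x t

lemma contDiff_mixedDeriv_space (hu : ContDiff ℝ ∞ ↿u) (i j : ℕ) (t : ℝ) :
    ContDiff ℝ ∞ (mixedDeriv u i j · t) :=
  (contDiff_mixedDeriv hu i j).comp (contDiff_id.prodMk contDiff_const)

lemma contDiff_mixedDeriv_time (hu : ContDiff ℝ ∞ ↿u) (i j : ℕ) (x : ℝ) :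
    ContDiff ℝ ∞ (mixedDeriv u i j x) :=
  (contDiff_mixedDeriv hu i j).comp (contDiff_const.prodMk contDiff_id)

lemma jet_mixedDeriv_space (u : ℝ → ℝ → E3) (i j n : ℕ) (x t : ℝ) :
    jet (mixedDeriv u i j · t) x n = mixedDeriv u i (j + n) x t := by
  induction n generalizing x with
  | zero => rfl
  | succ n ih =>
    simp only [jet, iteratedDeriv_succ] at ih ⊢
    rw [funext ih, ← add_assoc, mixedDeriv_succ_right, pdx]

lemma jet_mixedDeriv_time (hu : ContDiff ℝ ∞ ↿u) (i j n : ℕ) (x t : ℝ) :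
    jet (mixedDeriv u i j x) t n = mixedDeriv u (i + n) j x t := by
  induction n generalizing t with
  | zero => rfl
  | succ n ih =>
    simp only [jet, iteratedDeriv_succ] at ih ⊢
    rw [funext ih, ← add_assoc, mixedDeriv_succ_left hu, pdt]

lemma jet_space (u : ℝ → ℝ → E3) (m : ℕ) (x t : ℝ) : jet (u · t) x m = mixedDeriv u 0 m x t :=
  (jet_mixedDeriv_space u 0 0 m x t).trans (by rw [zero_add])

end MixedDerivatives

section SchrodingerFlow

lemma IsUnitJet.eq_zero_of_odd {a : ℕ → E3} (ha : IsUnitJet a) {l : ℕ} (hl : Odd l)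
    (hS : schrodingerJet a l = 0) (hodd : ∀ j < l + 2, Odd j → a j = 0) : a (l + 2) = 0 := by
  have hzero (j : ℕ) (h1 : 1 ≤ j) (h2 : j < l + 2) : a j = 0 ∨ a (l + 2 - j) = 0 := by
    obtain h | h := Nat.even_or_odd j
    · exact .inr (hodd _ (by lia) (by grind))
    · exact .inl (hodd j h2 h)
  refine eq_zero_of_cross3_eq_zero_of_inner_eq_zero
    (norm_ne_zero_iff.1 (ha.norm_zero.trans_ne one_ne_zero)) ?_ ?_
  · rw [schrodingerJet, sum_range_succ', sum_eq_zero] at hS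
    · simpa using hS
    · intro j hj
      rw [Finset.mem_range] at hj
      rw [show l - (j + 1) + 2 = l + 2 - (j + 1) by lia, ← crossCLM_apply]
      obtain h | h := hzero (j + 1) (by lia) (by lia) <;> rw [h] <;> simp
  · have h := ha.two_mul_inner_zero (Nat.succ_ne_zero (l + 1))
    rw [sum_eq_zero] at h
    · linarith
    · intro j hj
      rw [Finset.mem_Ico] at hj
      obtain h | h := hzero j (by lia) (by lia) <;> simp [h]

namespace IsSol

variable {T : ℝ} {u : ℝ → ℝ → E3} (hu : IsSol T u)
include hu

lemma contDiff : ContDiff ℝ ∞ ↿u := hu.1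

lemma contDiff_space (t : ℝ) : ContDiff ℝ ∞ (u · t) :=
  contDiff_mixedDeriv_space hu.contDiff 0 0 t

lemma isUnitJet_space {x t : ℝ} (hx : x ∈ Icc (0 : ℝ) 1) (ht : t ∈ Icc 0 T) :
    IsUnitJet (jet (u · t) x) :=
  isUnitJet_jet (hu.contDiff_space t) (uniqueDiffOn_Icc zero_lt_one)
    (fun y hy => hu.2.1 y hy t ht) hx

lemma mixedDeriv_succ_zero (hT : 0 < T) (i : ℕ) {x t : ℝ} (hx : x ∈ Icc (0 : ℝ) 1)
    (ht : t ∈ Icc 0 T) : mixedDeriv u (i + 1) 0 x t = ∑ a ∈ range (i + 1),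
      i.choose a • cross3 (mixedDeriv u a 0 x t) (mixedDeriv u (i - a) 2 x t) := by
  have hd (k l) := contDiff_mixedDeriv_time hu.contDiff k l x
  have heq : EqOn (mixedDeriv u 1 0 x)
      (fun s => crossCLM (mixedDeriv u 0 0 x s) (mixedDeriv u 0 2 x s)) (Icc 0 T) :=
    hu.2.2.1 x hx
  have h := eqOn_jet_sum_bilinear crossCLM (uniqueDiffOn_Icc hT) {0} (fun _ => 1) (hd 1 0)
    (fun k => hd k 0) (fun k => hd k 2) (by simpa using heq) i ht
  simpa [jet_mixedDeriv_time hu.contDiff, add_comm 1, crossCLM_apply] using h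

lemma mixedDeriv_succ (hT : 0 < T) (i j : ℕ) {x t : ℝ} (hx : x ∈ Icc (0 : ℝ) 1)
    (ht : t ∈ Icc 0 T) : mixedDeriv u (i + 1) j x t = ∑ a ∈ range (i + 1), i.choose a •
      ∑ b ∈ range (j + 1),
        j.choose b • cross3 (mixedDeriv u a b x t) (mixedDeriv u (i - a) (2 + (j - b)) x t) := by
  have hd (k l) := contDiff_mixedDeriv_space hu.contDiff k l t
  have h := eqOn_jet_sum_bilinear crossCLM (uniqueDiffOn_Icc zero_lt_one) (range (i + 1)) i.choose
    (hd (i + 1) 0) (fun a => hd a 0) (fun a => hd (i - a) 2)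
    (fun y hy => hu.mixedDeriv_succ_zero hT i hy ht) j hx
  simpa only [jet_mixedDeriv_space, zero_add, crossCLM_apply] using h

theorem mixedDeriv_one (hT : 0 < T) (m : ℕ) {x t : ℝ} (hx : x ∈ Icc (0 : ℝ) 1)
    (ht : t ∈ Icc 0 T) : mixedDeriv u 1 m x t = schrodingerJet (jet (u · t) x) m := by
  simpa [schrodingerJet, jet_space, add_comm 2] using hu.mixedDeriv_succ hT 0 m hx ht

theorem jet_eq_zero_of_odd (hT : 0 < T) {x : ℝ} (hx : x = 0 ∨ x = 1) {m : ℕ} (hm : Odd m) :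
    ∀ t ∈ Icc 0 T, jet (u · t) x m = 0 := by
  induction m using Nat.strong_induction_on with
  | _ m ih =>
    intro t ht
    obtain rfl | ⟨l, rfl⟩ : m = 1 ∨ ∃ l, m = l + 2 := by
      obtain ⟨r, rfl⟩ := hm
      exact r.eq_zero_or_pos.imp (by simp [·]) fun hr => ⟨2 * r - 1, by lia⟩
    · rw [jet, iteratedDeriv_one]
      obtain rfl | rfl := hx
      exacts [(hu.2.2.2 t ht).1, (hu.2.2.2 t ht).2]
    have hx' : x ∈ Icc (0 : ℝ) 1 := by obtain rfl | rfl := hx <;> simp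
    have hl : Odd l := by simpa [parity_simps] using hm
    have hconst : EqOn (mixedDeriv u 0 l x) (fun _ => 0) (Icc 0 T) := fun s hs => by
      rw [← jet_space]
      exact ih l (by lia) hl s hs
    refine (hu.isUnitJet_space hx' ht).eq_zero_of_odd hl ?_ fun j hj hjo => ih j hj hjo t ht
    rw [← hu.mixedDeriv_one hT l hx' ht, ← (hasDerivAt_mixedDeriv_time hu.contDiff 0 l x t).deriv,
      ← iteratedDeriv_one, eqOn_iteratedDeriv_of_eqOn (n := 1) (uniqueDiffOn_Icc hT)
      (contDiff_infty.1 (contDiff_mixedDeriv_time hu.contDiff 0 l x) 1) contDiff_const hconst ht]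
    simp

lemma isNeumannSphereCurve (hT : 0 < T) {t : ℝ} (ht : t ∈ Icc 0 T) :
    IsNeumannSphereCurve (u · t) where
  contDiff := hu.contDiff_space t
  norm_eq_one x hx := hu.2.1 x hx t ht
  jet_zero _ hl := hu.jet_eq_zero_of_odd hT (.inl rfl) hl t ht
  jet_one _ hl := hu.jet_eq_zero_of_odd hT (.inr rfl) hl t ht

end IsSol

end SchrodingerFlow

section EnergyEstimates

lemma integral_norm_jet_pow_four_le {f : ℝ → E3} (hf : ContDiff ℝ ∞ f) (j : ℕ) {ε : ℝ}
    (hε : 0 < ε) : ∫ x in (0 : ℝ)..1, ‖jet f x j‖ ^ 4 ≤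
      ((1 + ε⁻¹) * L2sq (jet f · j) + ε * L2sq (jet f · (j + 1))) * L2sq (jet f · j) := by
  have hcont := continuous_jet hf
  simp only [L2sq]
  rw [← intervalIntegral.integral_const_mul _ fun x => ‖jet f x j‖ ^ 2]
  refine intervalIntegral.integral_mono_on zero_le_one
    (Continuous.intervalIntegrable (by fun_prop) _ _)
    (Continuous.intervalIntegrable (by fun_prop) _ _) fun x hx => ?_
  have sobolev := norm_sq_le_integral_norm_sq_add (hasDerivAt_jet hf j) (hcont (j + 1))
    zero_lt_one hε hx
  rw [sub_zero, inv_one] at sobolev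
  calc ‖jet f x j‖ ^ 4 = ‖jet f x j‖ ^ 2 * ‖jet f x j‖ ^ 2 := by ring
    _ ≤ _ := by gcongr

/-- The second conserved quantity of the Schrödinger flow, after `∫ ‖∂ₓf‖²`. -/
def secondEnergy (f : ℝ → E3) : ℝ :=
  ∫ x in (0 : ℝ)..1, (‖jet f x 2‖ ^ 2 - 5 / 4 * ‖jet f x 1‖ ^ 4)

lemma secondEnergy_eq {f : ℝ → E3} (hf : ContDiff ℝ ∞ f) :
    secondEnergy f = L2sq (jet f · 2) - 5 / 4 * ∫ x in (0 : ℝ)..1, ‖jet f x 1‖ ^ 4 := by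
  have hcont := continuous_jet hf
  rw [secondEnergy, intervalIntegral.integral_sub (Continuous.intervalIntegrable (by fun_prop) _ _)
    (Continuous.intervalIntegrable (by fun_prop) _ _), intervalIntegral.integral_const_mul, L2sq]

lemma secondEnergy_le_L2sq_jet_two {f : ℝ → E3} (hf : ContDiff ℝ ∞ f) :
    secondEnergy f ≤ L2sq (jet f · 2) := by
  have : 0 ≤ ∫ x in (0 : ℝ)..1, ‖jet f x 1‖ ^ 4 :=
    intervalIntegral.integral_nonneg zero_le_one fun _ _ => by positivity
  linarith [secondEnergy_eq hf]

lemma L2sq_jet_two_le {f : ℝ → E3} (hf : ContDiff ℝ ∞ f) {A : ℝ} (hA : L2sq (jet f · 1) ≤ A) :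
    L2sq (jet f · 2) ≤ 8 / 3 * (secondEnergy f + 5 / 4 * ((1 + 2 * (A + 1)) * A ^ 2)) := by
  have h1 : 0 ≤ L2sq (jet f · 1) := L2sq_nonneg _
  have h2 : 0 ≤ L2sq (jet f · 2) := L2sq_nonneg _
  have hA0 : 0 ≤ A := h1.trans hA
  have quartic : ∫ x in (0 : ℝ)..1, ‖jet f x 1‖ ^ 4 ≤
      (1 + 2 * (A + 1)) * A ^ 2 + 1 / 2 * L2sq (jet f · 2) :=
    calc ∫ x in (0 : ℝ)..1, ‖jet f x 1‖ ^ 4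
        ≤ ((1 + 2 * (A + 1)) * L2sq (jet f · 1) + (2 * (A + 1))⁻¹ * L2sq (jet f · 2)) *
            L2sq (jet f · 1) := by
          simpa only [inv_inv] using
            integral_norm_jet_pow_four_le hf 1 (ε := (2 * (A + 1))⁻¹) (by positivity)
      _ ≤ ((1 + 2 * (A + 1)) * A + (2 * (A + 1))⁻¹ * L2sq (jet f · 2)) * A := by gcongr
      _ = (1 + 2 * (A + 1)) * A ^ 2 + A / (A + 1) * (1 / 2 * L2sq (jet f · 2)) := by
          field_simp
      _ ≤ (1 + 2 * (A + 1)) * A ^ 2 + 1 * (1 / 2 * L2sq (jet f · 2)) := by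
          gcongr
          exact (div_le_one (by positivity)).2 (by linarith)
      _ = (1 + 2 * (A + 1)) * A ^ 2 + 1 / 2 * L2sq (jet f · 2) := by ring
  linarith [secondEnergy_eq hf]

lemma eq_of_hasDerivAt_zero {φ : ℝ → ℝ} {a b : ℝ} (h : ∀ t ∈ Icc a b, HasDerivAt φ 0 t) :
    ∀ t ∈ Icc a b, φ t = φ a :=
  constant_of_has_deriv_right_zero (fun t ht => (h t ht).continuousAt.continuousWithinAt)
    fun t ht => (h t (Ico_subset_Icc_self ht)).hasDerivWithinAt

namespace IsSol

variable {T : ℝ} {u : ℝ → ℝ → E3} (hu : IsSol T u)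
include hu

lemma L2sq_jet_zero {t : ℝ} (ht : t ∈ Icc 0 T) : L2sq (jet (u · t) · 0) = 1 := by
  have heq : EqOn (fun x => ‖jet (u · t) x 0‖ ^ 2) (fun _ => 1) (Set.uIcc 0 1) := fun x hx => by
    rw [Set.uIcc_of_le zero_le_one] at hx
    simp [(hu.isUnitJet_space hx ht).norm_zero]
  rw [L2sq, intervalIntegral.integral_congr heq]
  simp

lemma hasDerivAt_L2sq_jet (hT : 0 < T) (m : ℕ) {t : ℝ} (ht : t ∈ Icc 0 T) :
    HasDerivAt (fun s => L2sq (jet (u · s) · m))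
      (∫ x in (0 : ℝ)..1, 2 * ⟪jet (u · t) x m, schrodingerJet (jet (u · t) x) m⟫_ℝ) t := by
  have hcont (i) : Continuous fun p : ℝ × ℝ => mixedDeriv u i m p.1 p.2 :=
    (contDiff_mixedDeriv hu.contDiff i m).continuous
  have h := hasDerivAt_integral_of_continuous (a := 0) (b := 1)
    (g := fun x t => ‖mixedDeriv u 0 m x t‖ ^ 2)
    (g' := fun x t => 2 * ⟪mixedDeriv u 0 m x t, mixedDeriv u 1 m x t⟫_ℝ)
    (by fun_prop) (by fun_prop)
    (fun x t => (hasDerivAt_mixedDeriv_time hu.contDiff 0 m x t).norm_sq) t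
  simp only [L2sq, jet_space]
  convert! h using 1
  refine intervalIntegral.integral_congr fun x hx => ?_
  rw [Set.uIcc_of_le zero_le_one] at hx
  simp only [hu.mixedDeriv_one hT m hx ht]

lemma L2sq_jet_one_eq_initial (hT : 0 < T) {t : ℝ} (ht : t ∈ Icc 0 T) :
    L2sq (jet (u · t) · 1) = L2sq (jet (u · 0) · 1) := by
  refine eq_of_hasDerivAt_zero (φ := fun s => L2sq (jet (u · s) · 1)) (fun s hs => ?_) t ht
  simpa only [intervalIntegral.integral_const_mul, mul_zero,
    (hu.isNeumannSphereCurve hT hs).integral_inner_schrodingerJet_one]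
    using hu.hasDerivAt_L2sq_jet hT 1 hs

lemma hasDerivAt_secondEnergy (hT : 0 < T) {t : ℝ} (ht : t ∈ Icc 0 T) :
    HasDerivAt (fun s => secondEnergy (u · s)) 0 t := by
  have hcont (i j) : Continuous fun p : ℝ × ℝ => mixedDeriv u i j p.1 p.2 :=
    (contDiff_mixedDeriv hu.contDiff i j).continuous
  have h := hasDerivAt_integral_of_continuous (a := 0) (b := 1)
    (g := fun x t => ‖mixedDeriv u 0 2 x t‖ ^ 2 - 5 / 4 * ‖mixedDeriv u 0 1 x t‖ ^ 4)
    (g' := fun x t => 2 * ⟪mixedDeriv u 0 2 x t, mixedDeriv u 1 2 x t⟫_ℝ -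
      5 * (‖mixedDeriv u 0 1 x t‖ ^ 2 * ⟪mixedDeriv u 0 1 x t, mixedDeriv u 1 1 x t⟫_ℝ))
    (by fun_prop) (by fun_prop)
    (fun x t => by
      have hd (j) := (hasDerivAt_mixedDeriv_time hu.contDiff 0 j x t).norm_sq
      convert! (hd 2).sub (((hd 1).pow 2).const_mul (5 / 4)) using 1
      · funext s
        simp only [Pi.sub_apply, Pi.pow_apply]
        ring
      · push_cast
        ring) t
  rw [← (hu.isNeumannSphereCurve hT ht).integral_inner_schrodingerJet_two]
  simp only [secondEnergy, jet_space]
  convert! h using 1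
  refine intervalIntegral.integral_congr fun x hx => ?_
  rw [Set.uIcc_of_le zero_le_one] at hx
  simp only [hu.mixedDeriv_one hT _ hx ht]

lemma secondEnergy_eq_initial (hT : 0 < T) {t : ℝ} (ht : t ∈ Icc 0 T) :
    secondEnergy (u · t) = secondEnergy (u · 0) :=
  eq_of_hasDerivAt_zero (fun _ hs => hu.hasDerivAt_secondEnergy hT hs) t ht

lemma one_add_L2sq_jet_le (hT : 0 < T) {m : ℕ} (hm : 3 ≤ m) {A : ℝ} (hA : 0 ≤ A)
    (hbound : ∀ j < m, ∀ t ∈ Icc 0 T, L2sq (jet (u · t) · j) ≤ A) {t : ℝ} (ht : t ∈ Icc 0 T) :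
    1 + L2sq (jet (u · t) · m) ≤ (1 + L2sq (jet (u · 0) · m)) *
      Real.exp (2 * (m * 2 ^ (m + 2) * (3 * A + 1) ^ 2 * (1 + m * A)) * t) := by
  have gronwall := le_mul_exp_of_hasDerivAt_le
    (φ := fun s => 1 + L2sq (jet (u · s) · m))
    (K := 2 * (m * 2 ^ (m + 2) * (3 * A + 1) ^ 2 * (1 + m * A)))
    (fun s hs => (hu.hasDerivAt_L2sq_jet hT m hs).const_add 1) (fun s hs => ?_) t ht
  · rwa [sub_zero] at gronwall
  · rw [intervalIntegral.integral_const_mul, mul_assoc]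
    gcongr
    exact (hu.isNeumannSphereCurve hT hs).integral_inner_schrodingerJet_le hm hA
      fun j hj => hbound j hj s hs

end IsSol

lemma exists_L2sq_jet_le_of_forall_lt {A T : ℝ} (hA : 0 ≤ A) (hT : 0 < T) (m : ℕ) :
    ∃ K, ∀ u, IsSol T u → L2sq (jet (u · 0) · m) ≤ A →
      (∀ j < m, ∀ t ∈ Icc 0 T, L2sq (jet (u · t) · j) ≤ A) →
      ∀ t ∈ Icc 0 T, L2sq (jet (u · t) · m) ≤ K := by
  match m with
  | 0 => exact ⟨1, fun u hu _ _ t ht => (hu.L2sq_jet_zero ht).le⟩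
  | 1 => exact ⟨A, fun u hu h0 _ t ht => (hu.L2sq_jet_one_eq_initial hT ht).trans_le h0⟩
  | 2 =>
    refine ⟨8 / 3 * (A + 5 / 4 * ((1 + 2 * (A + 1)) * A ^ 2)), fun u hu h0 hlt t ht => ?_⟩
    refine (L2sq_jet_two_le (hu.contDiff_space t) (hlt 1 one_lt_two t ht)).trans ?_
    rw [hu.secondEnergy_eq_initial hT ht]
    gcongr
    exact (secondEnergy_le_L2sq_jet_two (hu.contDiff_space 0)).trans h0
  | m + 3 =>
    refine ⟨(1 + A) * Real.exp (2 * (↑(m + 3) * 2 ^ (m + 3 + 2) * (3 * A + 1) ^ 2 *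
      (1 + ↑(m + 3) * A)) * T), fun u hu h0 hlt t ht => ?_⟩
    have h := hu.one_add_L2sq_jet_le hT (by lia) hA hlt ht
    refine (le_add_of_nonneg_left zero_le_one).trans (h.trans ?_)
    gcongr
    exact ht.2

theorem exists_forall_L2sq_jet_le {A T : ℝ} (hA : 0 ≤ A) (hT : 0 < T) (m : ℕ) :
    ∃ K, 0 ≤ K ∧ ∀ u, IsSol T u → (∀ j < m, L2sq (jet (u · 0) · j) ≤ A) →
      ∀ j < m, ∀ t ∈ Icc 0 T, L2sq (jet (u · t) · j) ≤ K := by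
  induction m with
  | zero => exact ⟨0, le_rfl, fun _ _ _ j hj => absurd hj j.not_lt_zero⟩
  | succ m ih =>
    obtain ⟨K, hK, hlt⟩ := ih
    obtain ⟨L, htop⟩ := exists_L2sq_jet_le_of_forall_lt (hA.trans (le_max_left A K)) hT m
    refine ⟨max K L, hK.trans (le_max_left K L), fun u hu h0 j hj t ht => ?_⟩
    have hlt' := hlt u hu fun j hj => h0 j (hj.trans m.lt_succ_self)
    obtain hj | rfl := (Nat.lt_succ_iff.1 hj).lt_or_eq
    · exact (hlt' j hj t ht).trans (le_max_left K L)
    · exact (htop u hu ((h0 j hj).trans (le_max_left A K))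
        (fun i hi s hs => (hlt' i hi s hs).trans (le_max_right A K)) t ht).trans (le_max_right K L)

end EnergyEstimates

section TimeDerivatives

lemma norm_cross3_le_of_le_weight {w : ℕ → ℝ} (hw : ∀ n, 0 ≤ w n)
    (hmul : ∀ m n, w m * w n ≤ w (m + n)) {K : ℝ} (hK : 0 ≤ K) {v v' : E3} {a c m n : ℕ}
    (hv : ‖v‖ ≤ 2 ^ (a * m) * K ^ (a + 1) * w m) (hv' : ‖v'‖ ≤ 2 ^ (c * n) * K ^ (c + 1) * w n) :
    ‖cross3 v v'‖ ≤ 2 ^ ((a + c) * (m + n)) * K ^ (a + c + 1 + 1) * w (m + n) :=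
  calc ‖cross3 v v'‖
      ≤ ‖v‖ * ‖v'‖ := norm_cross3_le v v'
    _ ≤ (2 ^ (a * m) * K ^ (a + 1) * w m) * (2 ^ (c * n) * K ^ (c + 1) * w n) := by
      have := hw m
      gcongr
    _ = 2 ^ (a * m + c * n) * K ^ (a + c + 1 + 1) * (w m * w n) := by ring
    _ ≤ 2 ^ ((a + c) * (m + n)) * K ^ (a + c + 1 + 1) * w (m + n) := by
      gcongr ?_ ^ ?_ * ?_ * ?_
      · exact mul_nonneg (hw m) (hw n)
      · exact one_le_two
      · nlinarith
      · exact hmul m n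

namespace IsSol

variable {T : ℝ} {u : ℝ → ℝ → E3} (hu : IsSol T u)
include hu

-- `∂ₜⁱ∂ₓʲu` is a combination of products of `i + 1` space derivatives of total order `2i + j`.
lemma norm_mixedDeriv_le (hT : 0 < T) {x t : ℝ} (hx : x ∈ Icc (0 : ℝ) 1) (ht : t ∈ Icc 0 T)
    {w : ℕ → ℝ} (hw : ∀ n, 0 ≤ w n) (hmul : ∀ m n, w m * w n ≤ w (m + n)) {K : ℝ} (hK : 0 ≤ K)
    {i j : ℕ} (hspace : ∀ l ≤ 2 * i + j, ‖mixedDeriv u 0 l x t‖ ≤ K * w l) :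
    ‖mixedDeriv u i j x t‖ ≤ 2 ^ (i * (2 * i + j)) * K ^ (i + 1) * w (2 * i + j) := by
  induction i using Nat.strong_induction_on generalizing j with
  | _ i ih =>
    obtain _ | i := i
    · simpa using hspace j (by lia)
    have hn := hw (2 * (i + 1) + j)
    have hterm : ∀ a ∈ range (i + 1), ∀ b ∈ range (j + 1),
        ‖cross3 (mixedDeriv u a b x t) (mixedDeriv u (i - a) (2 + (j - b)) x t)‖ ≤
          2 ^ (i * (2 * (i + 1) + j)) * K ^ (i + 1 + 1) * w (2 * (i + 1) + j) := by
      intro a ha b hb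
      obtain ⟨c, rfl⟩ := Nat.exists_eq_add_of_le (Finset.mem_range_succ_iff.1 ha)
      obtain ⟨d, rfl⟩ := Nat.exists_eq_add_of_le (Finset.mem_range_succ_iff.1 hb)
      have order : 2 * (a + c + 1) + (b + d) = 2 * a + b + (2 * c + (2 + d)) := by ring
      rw [Nat.add_sub_cancel_left, Nat.add_sub_cancel_left, order]
      exact norm_cross3_le_of_le_weight hw hmul hK
        (ih a (by lia) fun l hl => hspace l (by lia))
        (ih c (by lia) fun l hl => hspace l (by lia))
    rw [hu.mixedDeriv_succ hT i j hx ht]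
    calc _ ≤ 2 ^ i * (2 ^ j * (2 ^ (i * (2 * (i + 1) + j)) * K ^ (i + 1 + 1) *
            w (2 * (i + 1) + j))) :=
          norm_sum_choose_nsmul_le subset_rfl (by positivity) fun a ha =>
            norm_sum_choose_nsmul_le subset_rfl (by positivity) (hterm a ha)
      _ = 2 ^ (i * (2 * (i + 1) + j) + (i + j)) * K ^ (i + 1 + 1) * w (2 * (i + 1) + j) := by ring
      _ ≤ 2 ^ ((i + 1) * (2 * (i + 1) + j)) * K ^ (i + 1 + 1) * w (2 * (i + 1) + j) := by
        gcongr
        · exact one_le_two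
        · nlinarith

-- With the weight `s ^ ⌊n / N⌋` no product contains the top space derivative more than once.
lemma norm_mixedDeriv_le_of_forall_lt (hT : 0 < T) {x t : ℝ} (hx : x ∈ Icc (0 : ℝ) 1)
    (ht : t ∈ Icc 0 T) {N : ℕ} {K : ℝ} (hK : 1 ≤ K)
    (hlt : ∀ l < N, ‖mixedDeriv u 0 l x t‖ ≤ K) {i j : ℕ} (hij : 2 * i + j ≤ N) :
    ‖mixedDeriv u i j x t‖ ≤ 2 ^ (N * N) * K ^ (N + 1) * (1 + ‖mixedDeriv u 0 N x t‖) := by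
  set s := 1 + ‖mixedDeriv u 0 N x t‖
  have hs : 1 ≤ s := le_add_of_nonneg_right (norm_nonneg _)
  have htop : ‖mixedDeriv u 0 N x t‖ ≤ K * s ^ (N / N) := by
    obtain rfl | hN := N.eq_zero_or_pos
    · simpa [← jet_space, (hu.isUnitJet_space hx ht).norm_zero] using hK
    · rw [Nat.div_self hN, pow_one]
      exact (le_add_of_nonneg_left zero_le_one).trans (le_mul_of_one_le_left (by positivity) hK)
  have hspace : ∀ l ≤ 2 * i + j, ‖mixedDeriv u 0 l x t‖ ≤ K * s ^ (l / N) := fun l hl => by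
    obtain hlN | rfl := (hl.trans hij).lt_or_eq
    · simpa [Nat.div_eq_of_lt hlN] using hlt l hlN
    · exact htop
  have submul (m n : ℕ) : s ^ (m / N) * s ^ (n / N) ≤ s ^ ((m + n) / N) := by
    rw [← pow_add]
    exact pow_le_pow_right₀ hs Nat.div_add_div_le_add_div
  calc ‖mixedDeriv u i j x t‖
      ≤ 2 ^ (i * (2 * i + j)) * K ^ (i + 1) * s ^ ((2 * i + j) / N) :=
        hu.norm_mixedDeriv_le hT hx ht (w := fun n => s ^ (n / N)) (fun n => by positivity)
          submul (by positivity) hspace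
    _ ≤ 2 ^ (N * N) * K ^ (N + 1) * s ^ 1 := by
        gcongr
        · exact one_le_two
        · lia
        · lia
        · exact Nat.div_le_of_le_mul (by lia)
    _ = 2 ^ (N * N) * K ^ (N + 1) * s := by rw [pow_one]

lemma L2sq_mixedDeriv_le (hT : 0 < T) {t : ℝ} (ht : t ∈ Icc 0 T) {N : ℕ} {B : ℝ} (hB : 0 ≤ B)
    (hspace : ∀ l < N + 1, L2sq (jet (u · t) · l) ≤ B) {i j : ℕ} (hij : 2 * i + j ≤ N) :
    L2sq (mixedDeriv u i j · t) ≤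
      (2 ^ (N * N) * (1 + 3 * B) ^ (N + 1)) ^ 2 * (2 * (1 + B)) := by
  set c := 2 ^ (N * N) * (1 + 3 * B) ^ (N + 1)
  have hcont (i j) : Continuous fun x => mixedDeriv u i j x t :=
    (contDiff_mixedDeriv_space hu.contDiff i j t).continuous
  have sup {x : ℝ} (hx : x ∈ Icc (0 : ℝ) 1) (l : ℕ) (hl : l < N) :
      ‖mixedDeriv u 0 l x t‖ ≤ 1 + 3 * B := by
    have sobolev := norm_jet_sq_le (hu.contDiff_space t) l hx
    rw [jet_space] at sobolev
    exact abs_le_of_sq_le_sq' (by nlinarith [hspace l (by lia), hspace (l + 1) (by lia)])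
      (by positivity) |>.2
  have hpoint : ∀ x ∈ Icc (0 : ℝ) 1,
      ‖mixedDeriv u i j x t‖ ^ 2 ≤ c ^ 2 * (2 * (1 + ‖mixedDeriv u 0 N x t‖ ^ 2)) := fun x hx =>
    calc ‖mixedDeriv u i j x t‖ ^ 2 ≤ (c * (1 + ‖mixedDeriv u 0 N x t‖)) ^ 2 := by
          gcongr
          exact hu.norm_mixedDeriv_le_of_forall_lt hT hx ht (by linarith) (sup hx) hij
      _ = c ^ 2 * (1 + ‖mixedDeriv u 0 N x t‖) ^ 2 := mul_pow _ _ _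
      _ ≤ c ^ 2 * (2 * (1 + ‖mixedDeriv u 0 N x t‖ ^ 2)) := by
          gcongr
          simpa using add_sq_le (a := 1) (b := ‖mixedDeriv u 0 N x t‖)
  calc L2sq (mixedDeriv u i j · t)
      ≤ ∫ x in (0 : ℝ)..1, c ^ 2 * (2 * (1 + ‖mixedDeriv u 0 N x t‖ ^ 2)) :=
        intervalIntegral.integral_mono_on zero_le_one
          (Continuous.intervalIntegrable (by fun_prop) _ _)
          (Continuous.intervalIntegrable (by fun_prop) _ _) hpoint
    _ = c ^ 2 * (2 * (1 + L2sq (jet (u · t) · N))) := by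
        simp only [L2sq, jet_space, intervalIntegral.integral_const_mul]
        rw [intervalIntegral.integral_add (by simp)
          (Continuous.intervalIntegrable (by fun_prop) _ _)]
        simp
    _ ≤ c ^ 2 * (2 * (1 + B)) := by
        gcongr
        exact hspace N N.lt_succ_self

end IsSol

end TimeDerivatives

section HigherOrderEstimates

lemma Hsq_eq_sum_L2sq_jet (k : ℕ) (f : ℝ → E3) :
    Hsq k f = ∑ j ∈ range (k + 1), L2sq (jet f · j) := by
  simp only [Hsq, L2sq, jet, iteratedDeriv_eq_iterate]

lemma L2sq_jet_le_Hsq (f : ℝ → E3) {j k : ℕ} (hj : j < k + 1) : L2sq (jet f · j) ≤ Hsq k f := by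
  rw [Hsq_eq_sum_L2sq_jet]
  exact Finset.single_le_sum (f := fun j => L2sq (jet f · j)) (fun _ _ => L2sq_nonneg _)
    (Finset.mem_range.2 hj)

lemma Hsq_nonneg (k : ℕ) (f : ℝ → E3) : 0 ≤ Hsq k f :=
  (L2sq_nonneg _).trans (L2sq_jet_le_Hsq f k.succ_pos)

theorem exists_forall_Hsq_pdt_le (N : ℕ) {A T : ℝ} (hA : 0 ≤ A) (hT : 0 < T) :
    ∃ C, ∀ u, IsSol T u → (∀ j < N + 1, L2sq (jet (u · 0) · j) ≤ A) →
      ∀ i j, 2 * i + j ≤ N → ∀ t ∈ Icc 0 T, Hsq j (fun x => (pdt^[i] u) x t) ≤ C := by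
  obtain ⟨B, hB, hspace⟩ := exists_forall_L2sq_jet_le hA hT (N + 1)
  set c := (2 ^ (N * N) * (1 + 3 * B) ^ (N + 1)) ^ 2 * (2 * (1 + B))
  refine ⟨(N + 1 : ℕ) * c, fun u hu h0 i j hij t ht => ?_⟩
  calc Hsq j (fun x => (pdt^[i] u) x t)
      = ∑ l ∈ range (j + 1), L2sq (mixedDeriv u i l · t) := by
        rw [Hsq_eq_sum_L2sq_jet]
        refine Finset.sum_congr rfl fun l _ => congrArg L2sq (funext fun x => ?_)
        exact (jet_mixedDeriv_space u i 0 l x t).trans (by rw [zero_add])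
    _ ≤ (j + 1 : ℕ) * c := by
        rw [← nsmul_eq_mul]
        refine (Finset.sum_le_card_nsmul _ _ c fun l hl => ?_).trans_eq (by rw [Finset.card_range])
        exact hu.L2sq_mixedDeriv_le hT ht hB (fun l hl => hspace u hu h0 l hl t ht)
          (by have := Finset.mem_range.1 hl; lia)
    _ ≤ (N + 1 : ℕ) * c := by
        gcongr
        lia

theorem higher_order_estimates_schrodinger_flow_general (N : ℕ) :
    ∃ C : ℝ → ℝ → ℝ, ∀ T > 0, ∀ u, IsSol T u → ∀ i j, 2 * i + j ≤ N → ∀ t ∈ Icc 0 T,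
      Hsq j (fun x => (pdt^[i] u) x t) ≤ C (Hsq N (fun x => u x 0)) T := by
  choose! C hC using fun A (hA : 0 ≤ A) T (hT : 0 < T) =>
    exists_forall_Hsq_pdt_le N hA hT
  exact ⟨C, fun T hT u hu => hC _ (Hsq_nonneg N _) T hT u hu fun j hj => L2sq_jet_le_Hsq _ hj⟩

end HigherOrderEstimates

theorem higher_order_estimates_schrodinger_flow :
    ∀ k : ℕ, 2 ≤ k →
      ∃ C : ℝ → ℝ → ℝ, ∀ T > (0:ℝ), ∀ u : ℝ → ℝ → E3, IsSol T u →
        ∀ i : ℕ, i ≤ k → ∀ t ∈ Icc (0:ℝ) T,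
          Hsq (2 * (k - i) + 1) (fun x => (pdt^[i] u) x t)
            ≤ C (Hsq (2 * k + 1) (fun x => u x 0)) T := by
  intro k _
  obtain ⟨C, hC⟩ := higher_order_estimates_schrodinger_flow_general (2 * k + 1)
  exact ⟨C, fun T hT u hu i hi => hC T hT u hu i _ (by lia)⟩

end
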